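/- arXiv:2311.02837 — 2 statements merged into one kernel-verified Lean document; each statement's English description precedes it below -/
import Mathlib

section
/- (Complex S-lemma.) Let Q₁, Q₂ ∈ ℂ^{n×n} be Hermitian matrices, r₁, r₂ ∈ ℂⁿ, and s₁, s₂ ∈ ℝ. Define f(x) = Re(xᴴ Q₁ x) + 2 Re(xᴴ r₁) + s₁ and g(x) = Re(xᴴ Q₂ x) + 2 Re(xᴴ r₂) + s₂ for x ∈ ℂⁿ. Assume there exists x₀ ∈ ℂⁿ with g(x₀) < 0. Then the following are equivalent: (i) for all x ∈ ℂⁿ, g(x) ≤ 0 implies f(x) ≥ 0; (ii) there exists μ ≥ 0 such that the (n+1)×(n+1) block matrix [[Q₁, r₁],[r₁ᴴ, s₁]] + μ·[[Q₂, r₂],[r₂ᴴ, s₂]] is positive semidefinite. -/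
open Matrix ComplexOrder

/-!
Adjoining a coordinate `t` turns the two quadratic functions into quadratic forms, recovered at
`t = 1`; implication (i) extends to `t ≠ 0` by scaling and to `t = 0` by perturbing towards the
Slater point. For quadratic forms `F`, `G` it remains to find `μ ≥ 0` separating the numbers
`-F u / G u` with `G u > 0` from the numbers `F v / -G v` with `G v < 0`. They are separated because
the line through `u` in direction `v` meets `{G = 0}` on either side of `u`, where `F ≥ 0`, and a
weighted sum of the values of a form at these two points does not involve the polar term.
-/

section QuadraticForm

theorem quadraticForm_apply_add_smul {R M : Type*} [CommRing R] [AddCommGroup M] [Module R M]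
    (Q : QuadraticForm R M) (u v : M) (t : R) :
    Q (u + t • v) = Q u + t * QuadraticMap.polar Q u v + t ^ 2 * Q v := by
  rw [QuadraticMap.map_add Q, QuadraticMap.map_smul, QuadraticMap.polar_smul_right, smul_eq_mul,
    smul_eq_mul]
  ring

theorem quadraticForm_weighted_sum {R M : Type*} [CommRing R] [AddCommGroup M] [Module R M]
    (Q : QuadraticForm R M) (u v : M) (s t : R) :
    t * Q (u + s • v) + s * Q (u + t • -v) = (s + t) * (Q u + s * t * Q v) := by
  simp only [quadraticForm_apply_add_smul, QuadraticMap.polar_neg_right, QuadraticMap.map_neg]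
  ring

theorem exists_pos_quadratic_root {a c : ℝ} (ha : a < 0) (hc : 0 < c) (b : ℝ) :
    ∃ t : ℝ, 0 < t ∧ c + t * b + t ^ 2 * a = 0 := by
  have hdiscrim : b ^ 2 < discrim a b c := by
    rw [discrim]
    linarith [mul_neg_of_neg_of_pos ha hc]
  have hroot : discrim a b c = √(discrim a b c) * √(discrim a b c) :=
    (Real.mul_self_sqrt ((sq_nonneg b).trans hdiscrim.le)).symm
  have hb : -b < √(discrim a b c) := Real.lt_sqrt_of_sq_lt (by rwa [neg_sq])
  refine ⟨(-b - √(discrim a b c)) / (2 * a), div_pos_of_neg_of_neg (by linarith) (by linarith), ?_⟩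
  linear_combination (quadratic_eq_zero_iff ha.ne hroot _).2 (.inr rfl)

variable {V : Type*} [AddCommGroup V] [Module ℝ V] {F G : QuadraticForm ℝ V}

theorem exists_pos_quadraticForm_add_smul_eq_zero {u v : V} (hu : 0 < G u) (hv : G v < 0) :
    ∃ t : ℝ, 0 < t ∧ G (u + t • v) = 0 := by
  simp only [quadraticForm_apply_add_smul]
  exact exists_pos_quadratic_root hv hu _

theorem quadraticForm_neg_div_le_div_neg (h : ∀ z, G z ≤ 0 → 0 ≤ F z) {u v : V}
    (hu : 0 < G u) (hv : G v < 0) : -F u / G u ≤ F v / -G v := by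
  obtain ⟨s, hs, hGs⟩ := exists_pos_quadraticForm_add_smul_eq_zero hu hv
  obtain ⟨t, ht, hGt⟩ := exists_pos_quadraticForm_add_smul_eq_zero hu
    (v := -v) (by rwa [QuadraticMap.map_neg])
  have hst : 0 < s + t := add_pos hs ht
  have hG : G u + s * t * G v = 0 := by
    have := quadraticForm_weighted_sum G u v s t
    rw [hGs, hGt, mul_zero, mul_zero, add_zero] at this
    exact (mul_eq_zero.1 this.symm).resolve_left hst.ne'
  have hF : 0 ≤ F u + s * t * F v := by
    refine nonneg_of_mul_nonneg_right (a := s + t) ?_ hst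
    rw [← quadraticForm_weighted_sum]
    exact add_nonneg (mul_nonneg ht.le (h _ hGs.le)) (mul_nonneg hs.le (h _ hGt.le))
  rw [div_le_div_iff₀ hu (neg_pos.2 hv)]
  linear_combination mul_nonneg hF (neg_pos.2 hv).le - F v * hG

theorem quadraticForm_sLemma (hG : ∃ z₀, G z₀ < 0) :
    (∀ z, G z ≤ 0 → 0 ≤ F z) ↔ ∃ μ : ℝ, 0 ≤ μ ∧ ∀ z, 0 ≤ F z + μ * G z := by
  refine ⟨fun h => ?_, fun ⟨μ, hμ, h⟩ z hz => ?_⟩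
  · obtain ⟨z₀, hz₀⟩ := hG
    obtain ⟨μ, hlower, hupper⟩ : (upperBounds (insert 0 ((fun u => -F u / G u) '' {u | 0 < G u})) ∩
        lowerBounds ((fun v => F v / -G v) '' {v | G v < 0})).Nonempty := by
      refine exists_between_of_forall_le (Set.insert_nonempty _ _) ⟨_, z₀, hz₀, rfl⟩ ?_
      rintro _ (rfl | ⟨u, hu, rfl⟩) _ ⟨v, hv, rfl⟩
      · exact div_nonneg (h v (le_of_lt hv)) (neg_pos.2 hv).le
      · exact quadraticForm_neg_div_le_div_neg h hu hv
    refine ⟨μ, hlower (Set.mem_insert _ _), fun z => ?_⟩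
    rcases lt_trichotomy (G z) 0 with hz | hz | hz
    · have := (le_div_iff₀ (neg_pos.2 hz)).1 (hupper ⟨z, hz, rfl⟩)
      linarith
    · simpa [hz] using h z hz.le
    · have := (div_le_iff₀ hz).1 (hlower (Set.mem_insert_of_mem _ ⟨z, hz, rfl⟩))
      linarith
  · linarith [h z, mul_nonpos_of_nonneg_of_nonpos hμ hz]

theorem quadraticForm_nonneg_of_notMem_submodule (W : Submodule ℝ V) {z₀ : V} (hz₀ : z₀ ∉ W)
    (hG₀ : G z₀ < 0) (h : ∀ z ∉ W, G z ≤ 0 → 0 ≤ F z) {z : V} (hz : G z ≤ 0) : 0 ≤ F z := by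
  by_cases hzW : z ∉ W
  · exact h z hzW hz
  rw [not_not] at hzW
  wlog hpolar : QuadraticMap.polar G z z₀ ≤ 0 generalizing z
  · rw [← QuadraticMap.map_neg]
    refine this (by rwa [QuadraticMap.map_neg]) (W.neg_mem hzW) ?_
    rw [QuadraticMap.polar_neg_left]
    linarith
  have hperturbed : ∀ ε > (0 : ℝ), 0 ≤ F (z + ε • z₀) := by
    intro ε hε
    refine h _ ?_ ?_
    · rwa [W.add_mem_iff_right hzW, W.smul_mem_iff hε.ne']
    · rw [quadraticForm_apply_add_smul]
      linarith [mul_nonpos_of_nonneg_of_nonpos hε.le hpolar,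
        mul_neg_of_pos_of_neg (pow_pos hε 2) hG₀]
  have hcont : Continuous fun ε : ℝ => F (z + ε • z₀) := by
    simp only [quadraticForm_apply_add_smul]
    fun_prop
  have hlim := hcont.continuousWithinAt (s := Set.Ioi 0) (x := 0) |>.tendsto
  rw [zero_smul, add_zero] at hlim
  exact ge_of_tendsto hlim (Filter.eventually_of_mem self_mem_nhdsWithin hperturbed)

end QuadraticForm

section Matrix

variable {𝕜 m : Type*} [RCLike 𝕜]

/-- The block matrix `[[Q, r], [rᴴ, s]]`, which homogenizes `quadraticFunction Q r s`; the
homogenizing coordinate is indexed by `Unit`. -/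
def borderedMatrix (Q : Matrix m m 𝕜) (r : m → 𝕜) (s : ℝ) : Matrix (m ⊕ Unit) (m ⊕ Unit) 𝕜 :=
  fromBlocks Q (replicateCol Unit r) (replicateRow Unit (star r)) (of fun _ _ => (s : 𝕜))

theorem isHermitian_borderedMatrix {Q : Matrix m m 𝕜} (hQ : Q.IsHermitian)
    (r : m → 𝕜) (s : ℝ) : (borderedMatrix Q r s).IsHermitian :=
  hQ.fromBlocks (conjTranspose_replicateCol r) (by ext; simp)

variable [Fintype m]

/-- The real quadratic form `z ↦ Re (zᴴ A z)` of a square matrix `A` over `ℝ` or `ℂ`; the space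
`𝕜ᵐ` is regarded as a real vector space, so that results on real quadratic forms apply. -/
noncomputable def reQuadraticForm (A : Matrix m m 𝕜) : QuadraticForm ℝ (m → 𝕜) :=
  LinearMap.BilinMap.toQuadraticMap <|
    LinearMap.mk₂ ℝ (fun x y => RCLike.re (star x ⬝ᵥ A *ᵥ y))
      (fun x x' y => by rw [star_add, add_dotProduct, map_add])
      (fun c x y => by
        rw [star_smul, smul_dotProduct, star_trivial, RCLike.smul_re, smul_eq_mul])
      (fun x y y' => by rw [mulVec_add, dotProduct_add, map_add])
      (fun c x y => by rw [mulVec_smul, dotProduct_smul, RCLike.smul_re, smul_eq_mul])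

theorem reQuadraticForm_apply (A : Matrix m m 𝕜) (z : m → 𝕜) :
    reQuadraticForm A z = RCLike.re (star z ⬝ᵥ A *ᵥ z) :=
  rfl

theorem reQuadraticForm_smul (A : Matrix m m 𝕜) (c : 𝕜) (z : m → 𝕜) :
    reQuadraticForm A (c • z) = ‖c‖ ^ 2 * reQuadraticForm A z := by
  have hc : star c * c = ((‖c‖ ^ 2 : ℝ) : 𝕜) := by
    rw [← starRingEnd_apply, RCLike.conj_mul, RCLike.ofReal_pow]
  rw [reQuadraticForm_apply, star_smul, mulVec_smul, smul_dotProduct, dotProduct_smul, smul_smul,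
    hc, smul_eq_mul, RCLike.re_ofReal_mul, reQuadraticForm_apply]

theorem reQuadraticForm_add_smul (A B : Matrix m m 𝕜) (μ : ℝ) (z : m → 𝕜) :
    reQuadraticForm (A + (μ : 𝕜) • B) z = reQuadraticForm A z + μ * reQuadraticForm B z := by
  simp only [reQuadraticForm_apply, add_mulVec, smul_mulVec, dotProduct_add, dotProduct_smul,
    map_add, smul_eq_mul, RCLike.re_ofReal_mul]

theorem posSemidef_iff_reQuadraticForm_nonneg {A : Matrix m m 𝕜} (hA : A.IsHermitian) :
    A.PosSemidef ↔ ∀ z, 0 ≤ reQuadraticForm A z := by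
  rw [posSemidef_iff_dotProduct_mulVec, and_iff_right hA]
  refine forall_congr' fun z => ?_
  rw [RCLike.nonneg_iff (z := star z ⬝ᵥ A *ᵥ z), and_iff_left (hA.im_star_dotProduct_mulVec_self z),
    reQuadraticForm_apply]

/-- The quadratic function `x ↦ Re (xᴴ Q x) + 2 Re (xᴴ r) + s`. -/
def quadraticFunction (Q : Matrix m m 𝕜) (r : m → 𝕜) (s : ℝ) (x : m → 𝕜) : ℝ :=
  RCLike.re (star x ⬝ᵥ Q *ᵥ x) + 2 * RCLike.re (star x ⬝ᵥ r) + s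

theorem reQuadraticForm_borderedMatrix (Q : Matrix m m 𝕜) (r : m → 𝕜) (s : ℝ) (x : m → 𝕜) :
    reQuadraticForm (borderedMatrix Q r s) (Sum.elim x 1) = quadraticFunction Q r s x := by
  have hstar : star (Sum.elim x (1 : Unit → 𝕜)) = Sum.elim (star x) 1 := by
    ext (i | i) <;> simp
  have hconj : RCLike.re (star r ⬝ᵥ x) = RCLike.re (star x ⬝ᵥ r) := by
    rw [star_dotProduct, ← starRingEnd_apply, RCLike.conj_re]
  have hmulVec : borderedMatrix Q r s *ᵥ Sum.elim x 1 =
      Sum.elim (Q *ᵥ x + r) fun _ => star r ⬝ᵥ x + (s : 𝕜) := by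
    ext (i | i) <;> simp [borderedMatrix, mulVec, dotProduct]
  rw [reQuadraticForm_apply, hstar, hmulVec, sumElim_dotProduct_sumElim, dotProduct_add,
    one_dotProduct, Fintype.sum_unique, map_add, map_add, map_add, hconj, RCLike.ofReal_re,
    quadraticFunction]
  ring

theorem reQuadraticForm_borderedMatrix_of_ne_zero (Q : Matrix m m 𝕜) (r : m → 𝕜) (s : ℝ)
    {z : m ⊕ Unit → 𝕜} (hz : z (Sum.inr ()) ≠ 0) :
    reQuadraticForm (borderedMatrix Q r s) z = ‖z (Sum.inr ())‖ ^ 2 *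
      quadraticFunction Q r s ((z (Sum.inr ()))⁻¹ • z ∘ Sum.inl) := by
  have : z = z (Sum.inr ()) • Sum.elim ((z (Sum.inr ()))⁻¹ • z ∘ Sum.inl) 1 := by
    ext (i | i) <;> simp [hz]
  rw [← reQuadraticForm_borderedMatrix, ← reQuadraticForm_smul, ← this]

theorem quadraticFunction_nonneg_iff_reQuadraticForm_nonneg (Q₁ Q₂ : Matrix m m 𝕜)
    (r₁ r₂ : m → 𝕜) (s₁ s₂ : ℝ) (hx₀ : ∃ x₀, quadraticFunction Q₂ r₂ s₂ x₀ < 0) :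
    (∀ x, quadraticFunction Q₂ r₂ s₂ x ≤ 0 → 0 ≤ quadraticFunction Q₁ r₁ s₁ x) ↔
      ∀ z, reQuadraticForm (borderedMatrix Q₂ r₂ s₂) z ≤ 0 →
        0 ≤ reQuadraticForm (borderedMatrix Q₁ r₁ s₁) z := by
  obtain ⟨x₀, hx₀⟩ := hx₀
  refine ⟨fun h z => ?_, fun h x => ?_⟩
  · let W : Submodule ℝ (m ⊕ Unit → 𝕜) := LinearMap.ker (LinearMap.proj (Sum.inr ()))
    refine quadraticForm_nonneg_of_notMem_submodule W (z₀ := Sum.elim x₀ 1) (by simp [W])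
      (by rwa [reQuadraticForm_borderedMatrix]) fun z (hz : z (Sum.inr ()) ≠ 0) hGz => ?_
    have hnorm : 0 < ‖z (Sum.inr ())‖ ^ 2 := pow_pos (norm_pos_iff.2 hz) 2
    rw [reQuadraticForm_borderedMatrix_of_ne_zero _ _ _ hz] at hGz ⊢
    exact mul_nonneg hnorm.le (h _ (nonpos_of_mul_nonpos_right hGz hnorm))
  · simpa only [reQuadraticForm_borderedMatrix] using h (Sum.elim x 1)

theorem stmt_1_general (Q₁ Q₂ : Matrix m m 𝕜) (hQ₁ : Q₁.IsHermitian) (hQ₂ : Q₂.IsHermitian)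
    (r₁ r₂ : m → 𝕜) (s₁ s₂ : ℝ) (hx₀ : ∃ x₀, quadraticFunction Q₂ r₂ s₂ x₀ < 0) :
    (∀ x, quadraticFunction Q₂ r₂ s₂ x ≤ 0 → 0 ≤ quadraticFunction Q₁ r₁ s₁ x) ↔
      ∃ μ : ℝ, 0 ≤ μ ∧
        (borderedMatrix Q₁ r₁ s₁ + (μ : 𝕜) • borderedMatrix Q₂ r₂ s₂).PosSemidef := by
  have hHermitian (μ : ℝ) :
      (borderedMatrix Q₁ r₁ s₁ + (μ : 𝕜) • borderedMatrix Q₂ r₂ s₂).IsHermitian :=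
    (isHermitian_borderedMatrix hQ₁ r₁ s₁).add <|
      (isHermitian_borderedMatrix hQ₂ r₂ s₂).smul (RCLike.conj_ofReal μ)
  have hslater : ∃ z₀, reQuadraticForm (borderedMatrix Q₂ r₂ s₂) z₀ < 0 :=
    hx₀.imp' (Sum.elim · 1) fun x hx => by rwa [reQuadraticForm_borderedMatrix]
  rw [quadraticFunction_nonneg_iff_reQuadraticForm_nonneg _ _ _ _ _ _ hx₀,
    quadraticForm_sLemma hslater]
  simp only [posSemidef_iff_reQuadraticForm_nonneg (hHermitian _), reQuadraticForm_add_smul]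

end Matrix

/-- The complex S-lemma. -/
theorem stmt_1 {n : ℕ}
    (Q₁ Q₂ : Matrix (Fin n) (Fin n) ℂ) (hQ₁ : Q₁.IsHermitian) (hQ₂ : Q₂.IsHermitian)
    (r₁ r₂ : Fin n → ℂ) (s₁ s₂ : ℝ)
    (hx₀ : ∃ x₀ : Fin n → ℂ,
      (star x₀ ⬝ᵥ Q₂.mulVec x₀).re + 2 * (star x₀ ⬝ᵥ r₂).re + s₂ < 0) :
    (∀ x : Fin n → ℂ,
        (star x ⬝ᵥ Q₂.mulVec x).re + 2 * (star x ⬝ᵥ r₂).re + s₂ ≤ 0 →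
          0 ≤ (star x ⬝ᵥ Q₁.mulVec x).re + 2 * (star x ⬝ᵥ r₁).re + s₁) ↔
      (∃ μ : ℝ, 0 ≤ μ ∧
        (Matrix.fromBlocks Q₁ (Matrix.of fun i (_ : Unit) => r₁ i)
            (Matrix.of fun (_ : Unit) j => star (r₁ j))
            (Matrix.of fun (_ : Unit) (_ : Unit) => (s₁ : ℂ))
          + (μ : ℂ) • Matrix.fromBlocks Q₂ (Matrix.of fun i (_ : Unit) => r₂ i)
            (Matrix.of fun (_ : Unit) j => star (r₂ j))
            (Matrix.of fun (_ : Unit) (_ : Unit) => (s₂ : ℂ))).PosSemidef) :=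
  stmt_1_general Q₁ Q₂ hQ₁ hQ₂ r₁ r₂ s₁ s₂ hx₀
end

section
/- Let Q ∈ ℂ^{M×M} be Hermitian, r ∈ ℂ^M, s ∈ ℝ, d ≥ 0, and μ ≥ 0. If the (M+1)×(M+1) block matrix B(Q,r,s,μ,d) = [[Q + μ I_M, r],[rᴴ, s − μ d²]] is positive semidefinite, then for every x ∈ ℂ^M with ‖x‖ ≤ d, one has f_{Q,r,s}(x) = Re(xᴴ Q x) + 2 Re(xᴴ r) + s ≥ 0. -/
open Matrix ComplexOrder

/-!
Evaluating the form of `[[Q, r], [rᴴ, s]]` at `(x, 1)` gives `f_{Q,r,s}(x)`, so a positive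
semidefinite bordered matrix forces a nonnegative quadratic function. The rest is the easy direction
of the S-procedure: if `f₀ + μ f₁ ≥ 0` everywhere with `μ ≥ 0`, then `f₀ ≥ 0` wherever `f₁ ≤ 0`.
The ball `‖x‖ ≤ d` is the constraint `f₁(x) = ‖x‖² - d² ≤ 0`.
-/

section Quadratic

variable {𝕜 n : Type*} [RCLike 𝕜] [Fintype n]

/-- The real quadratic function `f_{Q,r,s}` on `𝕜ⁿ`; it serves both as objective and as
constraint. Taking the real part of `xᴴ Q x` makes it meaningful for every square matrix `Q`. -/
def quadraticFun (Q : Matrix n n 𝕜) (r : n → 𝕜) (s : ℝ) (x : n → 𝕜) : ℝ :=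
  RCLike.re (star x ⬝ᵥ Q *ᵥ x) + 2 * RCLike.re (star x ⬝ᵥ r) + s

/-- The bordered matrix `[[Q, r], [rᴴ, s]]`, whose quadratic form homogenizes `f_{Q,r,s}`;
the index `Sum.inr ()` carries the homogenizing coordinate. -/
def homogenization (Q : Matrix n n 𝕜) (r : n → 𝕜) (s : ℝ) : Matrix (n ⊕ Unit) (n ⊕ Unit) 𝕜 :=
  fromBlocks Q (replicateCol Unit r) (replicateRow Unit (star r)) (of fun _ _ ↦ (s : 𝕜))

theorem re_star_dotProduct_comm (x y : n → 𝕜) :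
    RCLike.re (star x ⬝ᵥ y) = RCLike.re (star y ⬝ᵥ x) := by
  rw [star_dotProduct, ← RCLike.conj_re, starRingEnd_apply, star_star, dotProduct_comm]

theorem re_star_dotProduct_self (x : n → 𝕜) :
    RCLike.re (star x ⬝ᵥ x) = ‖WithLp.toLp 2 x‖ ^ 2 := by
  rw [dotProduct_comm, ← EuclideanSpace.inner_toLp_toLp, inner_self_eq_norm_sq]

theorem re_star_dotProduct_homogenization_mulVec (Q : Matrix n n 𝕜) (r : n → 𝕜) (s : ℝ)
    (x : n → 𝕜) :
    RCLike.re (star (Sum.elim x 1) ⬝ᵥ homogenization Q r s *ᵥ Sum.elim x 1) =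
      quadraticFun Q r s x := by
  have hcol : replicateCol Unit r *ᵥ 1 = r := by
    ext; simp [mulVec, dotProduct]
  have hrow : RCLike.re (1 ⬝ᵥ replicateRow Unit (star r) *ᵥ x) = RCLike.re (star x ⬝ᵥ r) := by
    rw [replicateRow_mulVec_eq_const, re_star_dotProduct_comm x r]
    simp [dotProduct]
  have hcorner : RCLike.re (1 ⬝ᵥ of (fun _ _ : Unit ↦ (s : 𝕜)) *ᵥ 1) = s := by
    simp [mulVec, dotProduct]
  rw [homogenization, Function.star_sumElim, star_one, fromBlocks_mulVec,
    sumElim_dotProduct_sumElim, Sum.elim_comp_inl, Sum.elim_comp_inr, hcol]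
  simp only [dotProduct_add, map_add, hrow, hcorner, quadraticFun]
  ring

theorem quadraticFun_add_smul (Q₀ Q₁ : Matrix n n 𝕜) (r₀ r₁ : n → 𝕜) (s₀ s₁ μ : ℝ) (x : n → 𝕜) :
    quadraticFun (Q₀ + (μ : 𝕜) • Q₁) (r₀ + (μ : 𝕜) • r₁) (s₀ + μ * s₁) x =
      quadraticFun Q₀ r₀ s₀ x + μ * quadraticFun Q₁ r₁ s₁ x := by
  simp only [quadraticFun, add_mulVec, smul_mulVec, dotProduct_add, dotProduct_smul, smul_eq_mul,
    map_add, RCLike.re_ofReal_mul]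
  ring

theorem quadraticFun_nonneg_of_posSemidef {Q : Matrix n n 𝕜} {r : n → 𝕜} {s : ℝ}
    (h : (homogenization Q r s).PosSemidef) (x : n → 𝕜) : 0 ≤ quadraticFun Q r s x := by
  rw [← re_star_dotProduct_homogenization_mulVec]
  exact h.re_dotProduct_nonneg _

theorem quadraticFun_one_zero_neg_sq [DecidableEq n] (d : ℝ) (x : n → 𝕜) :
    quadraticFun 1 0 (-d ^ 2) x = ‖WithLp.toLp 2 x‖ ^ 2 - d ^ 2 := by
  simp only [quadraticFun, one_mulVec, re_star_dotProduct_self, dotProduct_zero, map_zero,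
    mul_zero, add_zero, sub_eq_add_neg]

theorem quadraticFun_nonneg_of_posSemidef_of_nonpos {Q₀ Q₁ : Matrix n n 𝕜} {r₀ r₁ : n → 𝕜}
    {s₀ s₁ μ : ℝ} (hμ : 0 ≤ μ)
    (h : (homogenization (Q₀ + (μ : 𝕜) • Q₁) (r₀ + (μ : 𝕜) • r₁) (s₀ + μ * s₁)).PosSemidef)
    {x : n → 𝕜} (hx : quadraticFun Q₁ r₁ s₁ x ≤ 0) : 0 ≤ quadraticFun Q₀ r₀ s₀ x := by
  have hsum := quadraticFun_nonneg_of_posSemidef h x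
  rw [quadraticFun_add_smul] at hsum
  linarith [mul_nonpos_of_nonneg_of_nonpos hμ hx]

theorem stmt_2_general [DecidableEq n] {Q : Matrix n n 𝕜} {r : n → 𝕜} {s d μ : ℝ} (hμ : 0 ≤ μ)
    (hB : (homogenization (Q + (μ : 𝕜) • 1) r (s - μ * d ^ 2)).PosSemidef)
    {x : n → 𝕜} (hx : ‖WithLp.toLp 2 x‖ ≤ d) : 0 ≤ quadraticFun Q r s x := by
  have hball : quadraticFun 1 0 (-d ^ 2) x ≤ 0 := by
    rw [quadraticFun_one_zero_neg_sq, sub_nonpos]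
    gcongr
  refine quadraticFun_nonneg_of_posSemidef_of_nonpos hμ ?_ hball
  rwa [smul_zero, add_zero, mul_neg, ← sub_eq_add_neg]

end Quadratic

theorem stmt_2 {M : ℕ} (Q : Matrix (Fin M) (Fin M) ℂ) (hQ : Q.IsHermitian)
    (r : Fin M → ℂ) (s d μ : ℝ) (hd : 0 ≤ d) (hμ : 0 ≤ μ)
    (hB : (Matrix.fromBlocks (Q + (μ : ℂ) • 1) (Matrix.of fun i (_ : Unit) => r i)
        (Matrix.of fun (_ : Unit) j => star (r j))
        (Matrix.of fun (_ : Unit) (_ : Unit) => ((s - μ * d ^ 2 : ℝ) : ℂ))).PosSemidef) :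
    ∀ x : Fin M → ℂ, ‖(EuclideanSpace.equiv (Fin M) ℂ).symm x‖ ≤ d →
      0 ≤ (star x ⬝ᵥ Q.mulVec x).re + 2 * (star x ⬝ᵥ r).re + s :=
  fun _ hx ↦ stmt_2_general hμ hB hx
end
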